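/- arXiv:1709.03218 — 3 statements merged into one kernel-verified Lean document; each statement's English description precedes it below -/
import Mathlib

section
/- Fix integers d ≥ 2 and n ≥ 1, and set N = n·d. Let c, c′ ∈ Z/N be such that the reflections r_c : i ↦ c−i and r_{c′} : i ↦ c′−i of Z/N have the same number of fixed points. Then the number of loopless generalized chord diagrams of order (n,d) invariant under r_c equals the number of those invariant under r_{c′}. -/
/-- A generalized linear diagram on points `1,…,N` whose blocks all have size `d`:
a partition of `{1,…,N}` into blocks of size `d`. -/
def IsLinearDiagram (N d : ℕ) (P : Finset (Finset ℕ)) : Prop :=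
  (∀ b ∈ P, b.card = d) ∧ (∀ b ∈ P, ∀ x ∈ b, x ∈ Finset.Icc 1 N) ∧
    ∀ x ∈ Finset.Icc 1 N, ∃! b : Finset ℕ, b ∈ P ∧ x ∈ b

/-- The number of loops of a linear diagram on points `1,…,N`: indices `i` with
`1 ≤ i ≤ N - 1` such that `i` and `i + 1` lie in the same block. -/
noncomputable def linLoops (N : ℕ) (P : Finset (Finset ℕ)) : ℕ :=
  Set.ncard {i : ℕ | 1 ≤ i ∧ i + 1 ≤ N ∧ ∃ b ∈ P, i ∈ b ∧ i + 1 ∈ b}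

/-- `numA d n k` : the number of generalized linear diagrams of order `(n,d)`
with exactly `k` loops. -/
noncomputable def numA (d n k : ℕ) : ℕ :=
  Set.ncard {P : Finset (Finset ℕ) | IsLinearDiagram (n * d) d P ∧ linLoops (n * d) P = k}

/-- `numA` with an integer loop index, zero for negative indices. -/
noncomputable def numAZ (d n : ℕ) (k : ℤ) : ℕ :=
  if 0 ≤ k then numA d n k.toNat else 0

/-- Binomial coefficient with integer arguments: `0` when `y < 0` or `y > x`. -/
def iChoose (x y : ℤ) : ℕ :=
  if 0 ≤ y ∧ y ≤ x then x.toNat.choose y.toNat else 0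

/-- A generalized chord diagram on `ZMod N` whose blocks all have size `d`:
a partition of `ZMod N` into blocks of size `d`. -/
def IsChordDiagram (N d : ℕ) (P : Finset (Finset (ZMod N))) : Prop :=
  (∀ b ∈ P, b.card = d) ∧ ∀ x : ZMod N, ∃! b : Finset (ZMod N), b ∈ P ∧ x ∈ b

/-- A chord diagram is loopless if no residues `i`, `i+1` lie in the same block. -/
def ChordLoopless (N : ℕ) (P : Finset (Finset (ZMod N))) : Prop :=
  ∀ i : ZMod N, ∀ b ∈ P, i ∈ b → i + 1 ∈ b → False

/-- `numB d n` : the number of loopless generalized chord diagrams of order `(n,d)`. -/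
noncomputable def numB (d n : ℕ) : ℕ :=
  Set.ncard {P : Finset (Finset (ZMod (n * d))) |
    IsChordDiagram (n * d) d P ∧ ChordLoopless (n * d) P}

/-- The shift `i ↦ i + v` modulo `M`, on the representatives `1,…,M`. -/
def shiftMod (M v i : ℕ) : ℕ := if i + v ≤ M then i + v else i + v - M

/-- An `m`-symmetric linear diagram with sector size `v` and blocks of size `d`:
a partition of `{1,…,m·v}` into blocks of size `d` invariant under the shift by `v`
modulo `m·v`. -/
def IsMSymLinear (d m v : ℕ) (P : Finset (Finset ℕ)) : Prop :=
  IsLinearDiagram (m * v) d P ∧ ∀ b ∈ P, b.image (shiftMod (m * v) v) ∈ P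

/-- The number of loops lying in sector `s` (sectors numbered from `0`):
indices `i` with `s·v + 1 ≤ i ≤ (s+1)·v - 1` such that `i` and `i + 1` lie
in the same block. -/
noncomputable def sectorLoops (v : ℕ) (P : Finset (Finset ℕ)) (s : ℕ) : ℕ :=
  Set.ncard {i : ℕ | s * v + 1 ≤ i ∧ i + 1 ≤ (s + 1) * v ∧ ∃ b ∈ P, i ∈ b ∧ i + 1 ∈ b}

/-- `numAtil d m v k` : the number of `m`-symmetric linear diagrams with sector size `v`,
blocks of size `d`, and exactly `k` loops in each sector (`ã(v,k;m,d)`). -/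
noncomputable def numAtil (d m v k : ℕ) : ℕ :=
  Set.ncard {P : Finset (Finset ℕ) |
    IsMSymLinear d m v P ∧ ∀ s < m, sectorLoops v P s = k}

/-!
Translation by `t` conjugates the reflection `i ↦ c - i` into `i ↦ c + (t + t) - i` and permutes the
loopless chord diagrams, so the number of loopless diagrams invariant under `i ↦ c - i` depends only
on the class of `c` modulo `2 · ZMod N`. There are at most two such classes, the even and the odd
residues, and `i ↦ c - i` has a fixed point exactly when `c` is even.
-/

theorem zmod_even_or_odd {N : ℕ} (c : ZMod N) : Even c ∨ Odd c := by
  obtain ⟨k, rfl⟩ := ZMod.intCast_surjective c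
  exact (Int.even_or_odd k).imp Even.intCast Odd.intCast

theorem zmod_even_sub_of_even_iff {N : ℕ} {a b : ZMod N} (h : Even a ↔ Even b) : Even (a - b) := by
  by_cases ha : Even a
  · exact ha.sub (h.1 ha)
  · have hb : ¬Even b := mt h.2 ha
    exact ((zmod_even_or_odd a).resolve_left ha).sub_odd ((zmod_even_or_odd b).resolve_left hb)

theorem ncard_add_self_eq_pos_iff {M : Type*} [Add M] [Finite M] {c : M} :
    0 < Set.ncard {x : M | x + x = c} ↔ Even c := by
  rw [Set.ncard_pos]
  exact exists_congr fun _ => eq_comm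

section Translation

variable {G : Type*} [AddCommGroup G] [DecidableEq G]

/-- Invariance of a family `P` of finite sets under the reflection `i ↦ c - i`. As the reflection is
an involution, it suffices to ask that it maps members of `P` to members of `P`. -/
def IsReflectionInvariant (c : G) (P : Finset (Finset G)) : Prop :=
  ∀ b ∈ P, b.image (fun i => c - i) ∈ P

/-- The loopless chord diagrams on `ZMod N` with blocks of size `d` that are invariant under the
reflection `i ↦ c - i`. -/
def reflectionInvariantDiagrams (N d : ℕ) (c : ZMod N) : Set (Finset (Finset (ZMod N))) :=
  {P | IsChordDiagram N d P ∧ ChordLoopless N P ∧ IsReflectionInvariant c P}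

open scoped Pointwise

theorem isChordDiagram_vadd_iff {N d : ℕ} (t : ZMod N) {P : Finset (Finset (ZMod N))} :
    IsChordDiagram N d (t +ᵥ P) ↔ IsChordDiagram N d P := by
  refine and_congr ?_ ?_
  · simp only [Finset.vadd_finset_def (s := P), Finset.forall_mem_image, Finset.card_vadd_finset]
  · rw [← (AddAction.toPerm t).forall_congr_right]
    refine forall_congr' fun x => ?_
    rw [← (AddAction.toPerm t).existsUnique_congr_right]
    simp only [AddAction.toPerm_apply, Finset.vadd_mem_vadd_finset_iff]

theorem chordLoopless_vadd_iff {N : ℕ} (t : ZMod N) {P : Finset (Finset (ZMod N))} :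
    ChordLoopless N (t +ᵥ P) ↔ ChordLoopless N P := by
  unfold ChordLoopless
  rw [← (AddAction.toPerm t).forall_congr_right]
  simp only [Finset.vadd_finset_def (s := P), Finset.forall_mem_image, AddAction.toPerm_apply,
    vadd_add_assoc, Finset.vadd_mem_vadd_finset_iff]

theorem image_reflection_vadd (c t : G) (b : Finset G) :
    (t +ᵥ b).image (fun i => c + (t + t) - i) = t +ᵥ b.image (fun i => c - i) := by
  simp only [Finset.vadd_finset_def, Finset.image_image]
  congr 1
  ext i
  simp only [Function.comp_apply, vadd_eq_add]
  abel

theorem isReflectionInvariant_vadd_iff {c : G} (t : G) {P : Finset (Finset G)} :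
    IsReflectionInvariant (c + (t + t)) (t +ᵥ P) ↔ IsReflectionInvariant c P := by
  simp only [IsReflectionInvariant, Finset.vadd_finset_def (s := P), Finset.forall_mem_image,
    image_reflection_vadd]
  simp only [← Finset.vadd_finset_def, Finset.vadd_mem_vadd_finset_iff]

theorem vadd_reflectionInvariantDiagrams {N d : ℕ} (c t : ZMod N) :
    t +ᵥ reflectionInvariantDiagrams N d c = reflectionInvariantDiagrams N d (c + (t + t)) := by
  ext P
  obtain ⟨Q, rfl⟩ := AddAction.surjective t P
  rw [Set.vadd_mem_vadd_set_iff]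
  exact (and_congr (isChordDiagram_vadd_iff t) <|
    and_congr (chordLoopless_vadd_iff t) (isReflectionInvariant_vadd_iff t)).symm

theorem ncard_reflectionInvariantDiagrams_eq_of_even_sub {N d : ℕ} {c c' : ZMod N}
    (h : Even (c' - c)) :
    (reflectionInvariantDiagrams N d c).ncard = (reflectionInvariantDiagrams N d c').ncard := by
  obtain ⟨t, ht⟩ := h
  rw [eq_add_of_sub_eq' ht, ← vadd_reflectionInvariantDiagrams, Set.ncard_vadd_set]

end Translation

/-- reflections of `ZMod (n·d)` with the same number of fixed points fix
the same number of loopless generalized chord diagrams. -/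
theorem reflection_fixed_count_eq (d : ℕ) (hd : 2 ≤ d) (n : ℕ) (hn : 1 ≤ n)
    (c c' : ZMod (n * d))
    (h : Set.ncard {x : ZMod (n * d) | x + x = c} =
      Set.ncard {x : ZMod (n * d) | x + x = c'}) :
    Set.ncard {P : Finset (Finset (ZMod (n * d))) |
        IsChordDiagram (n * d) d P ∧ ChordLoopless (n * d) P ∧
          ∀ b ∈ P, b.image (fun i => c - i) ∈ P} =
      Set.ncard {P : Finset (Finset (ZMod (n * d))) |
        IsChordDiagram (n * d) d P ∧ ChordLoopless (n * d) P ∧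
          ∀ b ∈ P, b.image (fun i => c' - i) ∈ P} := by
  have : NeZero (n * d) := ⟨Nat.mul_ne_zero (by omega) (by omega)⟩
  have even_iff : Even c' ↔ Even c := by
    rw [← ncard_add_self_eq_pos_iff, ← ncard_add_self_eq_pos_iff, h]
  exact ncard_reflectionInvariantDiagrams_eq_of_even_sub (zmod_even_sub_of_even_iff even_iff)
end

section
/- Fix an odd integer d ≥ 3 and an even integer n ≥ 2. The number of loopless generalized chord diagrams of order (n,d) that are invariant under the reflection i ↦ 1−i (mod n·d) (a reflection with no fixed points, since n·d is even) equals ã(n·d/2, 0; 2, d). -/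
/-!
Keep the points `1, …, v` of a `2`-symmetric diagram and reverse the order of `v + 1, …, 2v`: this
carries the shift by `v` to the reflection `i ↦ 1 - i`, and the loops of the linear diagram to all
pairs `i, i + 1` of residues except `{0, 1}` and `{v, v + 1}`. The reflection exchanges the two
points of each of these exceptional pairs, so a block containing such a pair would be its own
mirror image and, as the reflection has no fixed point, would have an even number of points.
-/

section Transport

variable {α β : Type*}

/-- `P` partitions the set `S` into blocks of size `d`; this is the common form of linear
diagrams (`S = {1, …, N}`) and chord diagrams (`S` is all of `ZMod N`). -/
def IsUniformPartition (S : Set α) (d : ℕ) (P : Finset (Finset α)) : Prop :=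
  (∀ b ∈ P, b.card = d) ∧ (∀ b ∈ P, (b : Set α) ⊆ S) ∧ ∀ x ∈ S, ∃! b : Finset α, b ∈ P ∧ x ∈ b

/-- The partitions of `S` into blocks of size `d` that are invariant under `σ` and loopless, where
a loop is a pair of points in the same block that are related by `r`. Making `r` a parameter
allows different notions of consecutive points. -/
def symmDiagrams [DecidableEq α] (S : Set α) (d : ℕ) (σ : α → α) (r : α → α → Prop) :
    Set (Finset (Finset α)) :=
  {P | IsUniformPartition S d P ∧ (∀ b ∈ P, b.image σ ∈ P) ∧
    ∀ b ∈ P, ∀ x ∈ b, ∀ y ∈ b, ¬ r x y}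

variable [DecidableEq β] {S : Set α} {T : Set β} {g : α → β} {d : ℕ} {P : Finset (Finset α)}

theorem mem_finset_image_iff_of_injOn (hg : Set.InjOn g S) {b : Finset α} (hb : (b : Set α) ⊆ S)
    {x : α} (hx : x ∈ S) : g x ∈ b.image g ↔ x ∈ b := by
  rw [← Finset.mem_coe, Finset.coe_image, hg.mem_image_iff hb hx, Finset.mem_coe]

theorem IsUniformPartition.image (hP : IsUniformPartition S d P) (hg : Set.BijOn g S T) :
    IsUniformPartition T d (P.image (Finset.image g)) := by
  obtain ⟨hcard, hsub, huniq⟩ := hP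
  refine ⟨?_, ?_, ?_⟩
  · rw [Finset.forall_mem_image]
    intro b hb
    rw [Finset.card_image_of_injOn (hg.injOn.mono (hsub b hb)), hcard b hb]
  · rw [Finset.forall_mem_image]
    intro b hb
    rw [Finset.coe_image]
    exact (hg.mapsTo.mono_left (hsub b hb)).image_subset
  · intro y hy
    obtain ⟨x, hx, rfl⟩ := hg.surjOn hy
    obtain ⟨b, ⟨hb, hxb⟩, hunique⟩ := huniq x hx
    refine ⟨b.image g, ⟨Finset.mem_image_of_mem _ hb, Finset.mem_image_of_mem g hxb⟩, ?_⟩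
    rintro c' ⟨hc', hxc⟩
    obtain ⟨c, hc, rfl⟩ := Finset.mem_image.1 hc'
    rw [hunique c ⟨hc, (mem_finset_image_iff_of_injOn hg.injOn (hsub c hc) hx).1 hxc⟩]

variable [DecidableEq α] {f : β → α} {σ : α → α} {τ : β → β} {r : α → α → Prop}
  {r' : β → β → Prop}

theorem leftInvOn_finset_image (h : Set.LeftInvOn f g S) :
    Set.LeftInvOn (Finset.image f) (Finset.image g) {b | (b : Set α) ⊆ S} := by
  intro b hb
  rw [← Finset.coe_inj, Finset.coe_image, Finset.coe_image, h.image_image' hb]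

theorem mapsTo_image_image_symmDiagrams (hg : Set.BijOn g S T)
    (hστ : ∀ x ∈ S, g (σ x) = τ (g x)) (hr : ∀ x ∈ S, ∀ y ∈ S, r' (g x) (g y) → r x y) :
    Set.MapsTo (Finset.image (Finset.image g)) (symmDiagrams S d σ r)
      (symmDiagrams T d τ r') := by
  rintro P ⟨hP, hinv, hloopless⟩
  have hsub := hP.2.1
  refine ⟨hP.image hg, ?_, ?_⟩
  · rw [Finset.forall_mem_image]
    intro b hb
    have himage : (b.image g).image τ = (b.image σ).image g := by
      rw [Finset.image_image, Finset.image_image]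
      exact Finset.image_congr fun x hx => (hστ x (hsub b hb hx)).symm
    rw [himage]
    exact Finset.mem_image_of_mem _ (hinv b hb)
  · simp only [Finset.forall_mem_image]
    exact fun b hb x hx y hy hxy =>
      hloopless b hb x hx y hy (hr x (hsub b hb hx) y (hsub b hb hy) hxy)

theorem bijOn_image_image_symmDiagrams [Nonempty α] (hg : Set.BijOn g S T)
    (hσ : Set.MapsTo σ S S) (hστ : ∀ x ∈ S, g (σ x) = τ (g x))
    (hr : ∀ x ∈ S, ∀ y ∈ S, r x y ↔ r' (g x) (g y)) :
    Set.BijOn (Finset.image (Finset.image g)) (symmDiagrams S d σ r) (symmDiagrams T d τ r') := by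
  have hinv : Set.InvOn (Function.invFunOn g S) g S T := hg.invOn_invFunOn
  have hf : Set.BijOn (Function.invFunOn g S) T S := hg.symm hinv.symm
  have hτσ : ∀ y ∈ T, Function.invFunOn g S (τ y) = σ (Function.invFunOn g S y) := by
    intro y hy
    obtain ⟨x, hx, rfl⟩ := hg.surjOn hy
    rw [← hστ x hx, hinv.1 hx, hinv.1 (hσ hx)]
  have hr' : ∀ y ∈ T, ∀ z ∈ T,
      r (Function.invFunOn g S y) (Function.invFunOn g S z) → r' y z := by
    intro y hy z hz h
    rwa [hr _ (hf.mapsTo hy) _ (hf.mapsTo hz), hinv.2 hy, hinv.2 hz] at h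
  refine Set.InvOn.bijOn (f' := Finset.image (Finset.image (Function.invFunOn g S)))
    ⟨?_, ?_⟩ (mapsTo_image_image_symmDiagrams hg hστ fun x hx y hy => (hr x hx y hy).2)
    (mapsTo_image_image_symmDiagrams hf hτσ hr')
  · exact (leftInvOn_finset_image (leftInvOn_finset_image hinv.1)).mono fun _ hP => hP.1.2.1
  · exact (leftInvOn_finset_image (leftInvOn_finset_image hinv.2)).mono fun _ hP => hP.1.2.1

end Transport

section Involution

variable {α : Type*} {σ : α → α}

theorem even_card_of_fixedPointFree_involution {b : Finset α} (hσ : Function.Involutive σ)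
    (hfix : ∀ x ∈ b, σ x ≠ x) (hb : ∀ x ∈ b, σ x ∈ b) : Even b.card := by
  have hsum : ∑ _x ∈ b, (1 : ZMod 2) = 0 :=
    Finset.sum_involution (fun x _ => σ x) (fun _ _ => by decide) (fun x hx _ => hfix x hx) hb
      fun x _ => hσ x
  rwa [Finset.sum_const, nsmul_one, ZMod.natCast_eq_zero_iff_even] at hsum

theorem IsUniformPartition.apply_notMem_of_odd [DecidableEq α] {S : Set α} {d : ℕ}
    {P : Finset (Finset α)} (hP : IsUniformPartition S d P) (hσ : Function.Involutive σ)
    (hfix : ∀ x ∈ S, σ x ≠ x) (hd : Odd d) (hinv : ∀ b ∈ P, b.image σ ∈ P)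
    {b : Finset α} (hb : b ∈ P) {x : α} (hx : x ∈ b) : σ x ∉ b := by
  intro hσx
  have himage : b.image σ = b :=
    (hP.2.2 (σ x) (hP.2.1 b hb hσx)).unique
      ⟨hinv b hb, Finset.mem_image_of_mem σ hx⟩ ⟨hb, hσx⟩
  have heven : Even b.card := even_card_of_fixedPointFree_involution hσ
    (fun y hy => hfix y (hP.2.1 b hb hy)) fun _ hy => himage ▸ Finset.mem_image_of_mem σ hy
  rw [hP.1 b hb] at heven
  exact Nat.not_even_iff_odd.2 hd heven

end Involution

theorem one_sub_ne_self {N : ℕ} (hN : Even N) (x : ZMod N) : 1 - x ≠ x := by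
  intro h
  have hmod2 : ∀ y : ZMod 2, 1 - y ≠ y := by decide
  apply hmod2 (ZMod.castHom hN.two_dvd (ZMod 2) x)
  rw [← map_one (ZMod.castHom hN.two_dvd (ZMod 2)), ← map_sub, h]

theorem isUniformPartition_univ_iff {N d : ℕ} {P : Finset (Finset (ZMod N))} :
    IsUniformPartition Set.univ d P ↔ IsChordDiagram N d P := by
  simp only [IsUniformPartition, IsChordDiagram, Set.subset_univ, implies_true, true_and,
    Set.mem_univ, forall_const]

theorem isUniformPartition_Icc_iff {N d : ℕ} {P : Finset (Finset ℕ)} :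
    IsUniformPartition (Set.Icc 1 N) d P ↔ IsLinearDiagram N d P := by
  simp only [IsUniformPartition, IsLinearDiagram, ← Finset.coe_Icc, Finset.coe_subset,
    Finset.subset_iff, Finset.mem_coe]

theorem setOf_loopless_reflectionInvariant_eq {N d : ℕ} (hN : Even N) (hd : Odd d) :
    {P : Finset (Finset (ZMod N)) | IsChordDiagram N d P ∧ ChordLoopless N P ∧
      ∀ b ∈ P, b.image (fun i => 1 - i) ∈ P} =
    symmDiagrams Set.univ d (fun i => 1 - i) fun i j => j = i + 1 ∧ j ≠ 1 - i := by
  ext P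
  constructor
  · rintro ⟨hP, hloopless, hinv⟩
    refine ⟨isUniformPartition_univ_iff.2 hP, hinv, ?_⟩
    rintro b hb i hi j hj ⟨rfl, -⟩
    exact hloopless i b hb hi hj
  · rintro ⟨hP, hinv, hloopless⟩
    refine ⟨isUniformPartition_univ_iff.1 hP, fun i b hb hi hi' => ?_, hinv⟩
    refine hloopless b hb i hi (i + 1) hi' ⟨rfl, fun hmirror => ?_⟩
    exact hP.apply_notMem_of_odd (sub_sub_cancel 1) (fun x _ => one_sub_ne_self hN x) hd hinv hb hi
      (hmirror ▸ hi')

/-- In the sector `1, …, v`, `y` is the successor of `x`; in the sector above `v`, its predecessor.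
The two sectors are ordered oppositely because `sectorToResidue` reverses the upper one. -/
def SectorSucc (v x y : ℕ) : Prop :=
  y = x + 1 ∧ x < v ∨ x = y + 1 ∧ v < y

theorem sectorLoops_eq_zero_iff {v s : ℕ} {P : Finset (Finset ℕ)} :
    sectorLoops v P s = 0 ↔
      ∀ b ∈ P, ∀ i ∈ b, i + 1 ∈ b → s * v + 1 ≤ i → ¬ i + 1 ≤ (s + 1) * v := by
  have hfinite : {i : ℕ | s * v + 1 ≤ i ∧ i + 1 ≤ (s + 1) * v ∧
      ∃ b ∈ P, i ∈ b ∧ i + 1 ∈ b}.Finite :=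
    (Set.finite_Iic ((s + 1) * v)).subset fun i hi => (Nat.le_succ i).trans hi.2.1
  rw [sectorLoops, Set.ncard_eq_zero hfinite, Set.eq_empty_iff_forall_notMem]
  exact ⟨fun h b hb i hi hi' hlo hhi => h i ⟨hlo, hhi, b, hb, hi, hi'⟩,
    fun h i ⟨hlo, hhi, b, hb, hi, hi'⟩ => h b hb i hi hi' hlo hhi⟩

theorem setOf_loopless_twoSymmetric_eq {d v : ℕ} :
    {P : Finset (Finset ℕ) | IsMSymLinear d 2 v P ∧ ∀ s < 2, sectorLoops v P s = 0} =
      symmDiagrams (Set.Icc 1 (2 * v)) d (shiftMod (2 * v) v) (SectorSucc v) := by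
  ext P
  simp only [symmDiagrams, IsMSymLinear, ← isUniformPartition_Icc_iff, Set.mem_ofPred_eq,
    and_assoc, sectorLoops_eq_zero_iff]
  refine and_congr_right fun hP => and_congr_right fun _ => ⟨?_, ?_⟩
  · rintro hloops b hb x hx y hy (⟨rfl, hlt⟩ | ⟨rfl, hlt⟩)
    · have hx1 : 1 ≤ x := (hP.2.1 b hb hx).1
      exact hloops 0 two_pos b hb x hx hy (by omega) (by omega)
    · have hx2 : y + 1 ≤ 2 * v := (hP.2.1 b hb hx).2
      exact hloops 1 one_lt_two b hb y hy hx (by omega) (by omega)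
  · intro hloopless s hs b hb i hi hi' hlo hhi
    interval_cases s
    · exact hloopless b hb i hi (i + 1) hi' (Or.inl ⟨rfl, by omega⟩)
    · exact hloopless b hb (i + 1) hi' i hi (Or.inr ⟨rfl, by omega⟩)

section SectorToResidue

variable {v : ℕ}

/-- The relabelling of `{1, …, 2v}` by residues modulo `2v` that keeps `1, …, v` and sends
`v + 1, …, 2v` to `0, -1, …, 1 - v`. -/
def sectorToResidue (v j : ℕ) : ZMod (2 * v) :=
  if j ≤ v then j else 1 + v - j

theorem sectorToResidue_of_le {j : ℕ} (h : j ≤ v) : sectorToResidue v j = j :=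
  if_pos h

theorem sectorToResidue_of_lt {j : ℕ} (h : v < j) : sectorToResidue v j = 1 + v - j :=
  if_neg h.not_ge

theorem two_mul_natCast_self (v : ℕ) : (2 : ZMod (2 * v)) * v = 0 := by
  exact_mod_cast ZMod.natCast_self (2 * v)

theorem mapsTo_shiftMod :
    Set.MapsTo (shiftMod (2 * v) v) (Set.Icc 1 (2 * v)) (Set.Icc 1 (2 * v)) := by
  rintro j ⟨hj, hj'⟩
  rw [Set.mem_Icc, shiftMod]
  split_ifs <;> omega

theorem sectorToResidue_shiftMod (j : ℕ) (hj : j ∈ Set.Icc 1 (2 * v)) :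
    sectorToResidue v (shiftMod (2 * v) v j) = 1 - sectorToResidue v j := by
  obtain ⟨hj1, hj2⟩ := hj
  rcases le_or_gt j v with hjv | hjv
  · rw [shiftMod, if_pos (by omega), sectorToResidue_of_lt (by omega), sectorToResidue_of_le hjv]
    push_cast
    ring
  · have hshift : shiftMod (2 * v) v j = j - v := by
      rw [shiftMod, if_neg (by omega)]
      omega
    rw [hshift, sectorToResidue_of_le (by omega), sectorToResidue_of_lt hjv,
      Nat.cast_sub hjv.le]
    ring

theorem surjOn_sectorToResidue [NeZero v] :
    Set.SurjOn (sectorToResidue v) (Set.Icc 1 (2 * v)) Set.univ := by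
  intro i _
  have hlt : i.val < 2 * v := i.val_lt
  have hval : (i.val : ZMod (2 * v)) = i := ZMod.natCast_zmod_val i
  have hv : 0 < v := NeZero.pos v
  rcases Nat.eq_zero_or_pos i.val with hzero | hpos
  · refine ⟨v + 1, ⟨by omega, by omega⟩, ?_⟩
    rw [sectorToResidue_of_lt (by omega), ← hval, hzero]
    push_cast
    ring
  rcases le_or_gt i.val v with hle | hgt
  · exact ⟨i.val, ⟨hpos, hlt.le⟩, (sectorToResidue_of_le hle).trans hval⟩
  · refine ⟨3 * v + 1 - i.val, ⟨by omega, by omega⟩, ?_⟩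
    rw [sectorToResidue_of_lt (by omega), Nat.cast_sub (by omega), hval]
    push_cast
    linear_combination -two_mul_natCast_self v

theorem bijOn_sectorToResidue [NeZero v] :
    Set.BijOn (sectorToResidue v) (Set.Icc 1 (2 * v)) Set.univ := by
  refine ⟨Set.mapsTo_univ _ _, ?_, surjOn_sectorToResidue⟩
  have hsurj : Set.SurjOn (sectorToResidue v) (Finset.Icc 1 (2 * v))
      (Finset.univ : Finset (ZMod (2 * v))) := by
    simpa only [Finset.coe_Icc, Finset.coe_univ] using surjOn_sectorToResidue
  rw [← Finset.coe_Icc]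
  refine Finset.injOn_of_surjOn_of_card_le _ (fun _ _ => Finset.mem_univ _) hsurj ?_
  rw [Nat.card_Icc, Finset.card_univ, ZMod.card, Nat.add_sub_cancel]

theorem sectorToResidue_eq_add_one_of_sectorSucc {x y : ℕ} (h : SectorSucc v x y) :
    sectorToResidue v y = sectorToResidue v x + 1 := by
  rcases h with ⟨rfl, hlt⟩ | ⟨rfl, hlt⟩
  · rw [sectorToResidue_of_le hlt, sectorToResidue_of_le hlt.le, Nat.cast_succ]
  · rw [sectorToResidue_of_lt hlt, sectorToResidue_of_lt (by omega), Nat.cast_succ]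
    ring

theorem exists_sectorSucc_or_add_one_eq_one_sub {x : ℕ} (hx : x ∈ Set.Icc 1 (2 * v)) :
    (∃ y ∈ Set.Icc 1 (2 * v), SectorSucc v x y) ∨
      sectorToResidue v x + 1 = 1 - sectorToResidue v x := by
  obtain ⟨hx1, hx2⟩ := hx
  rcases lt_trichotomy x v with hlt | rfl | hgt
  · exact Or.inl ⟨x + 1, ⟨by omega, by omega⟩, Or.inl ⟨rfl, hlt⟩⟩
  · right
    rw [sectorToResidue_of_le le_rfl]
    linear_combination two_mul_natCast_self x
  · rcases Nat.lt_or_eq_of_le (Nat.succ_le_of_lt hgt) with hgt' | rfl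
    · exact Or.inl ⟨x - 1, ⟨by omega, by omega⟩, Or.inr ⟨by omega, by omega⟩⟩
    · right
      rw [sectorToResidue_of_lt hgt]
      push_cast
      ring

theorem not_sectorSucc_shiftMod {x : ℕ} (hx : x ∈ Set.Icc 1 (2 * v)) :
    ¬ SectorSucc v x (shiftMod (2 * v) v x) := by
  obtain ⟨hx1, hx2⟩ := hx
  unfold SectorSucc shiftMod
  split_ifs <;> omega

theorem sectorSucc_iff [NeZero v] (x : ℕ) (hx : x ∈ Set.Icc 1 (2 * v)) (y : ℕ)
    (hy : y ∈ Set.Icc 1 (2 * v)) :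
    SectorSucc v x y ↔ sectorToResidue v y = sectorToResidue v x + 1 ∧
      sectorToResidue v y ≠ 1 - sectorToResidue v x := by
  have hinj : Set.InjOn (sectorToResidue v) (Set.Icc 1 (2 * v)) := bijOn_sectorToResidue.injOn
  constructor
  · intro h
    refine ⟨sectorToResidue_eq_add_one_of_sectorSucc h, fun hmirror => ?_⟩
    rw [← sectorToResidue_shiftMod x hx] at hmirror
    have hyx : y = shiftMod (2 * v) v x := hinj hy (mapsTo_shiftMod hx) hmirror
    exact not_sectorSucc_shiftMod hx (hyx ▸ h)
  · rintro ⟨hsucc, hmirror⟩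
    rcases exists_sectorSucc_or_add_one_eq_one_sub hx with ⟨z, hz, hxz⟩ | hself
    · have hyz : y = z :=
        hinj hy hz (hsucc.trans (sectorToResidue_eq_add_one_of_sectorSucc hxz).symm)
      exact hyz ▸ hxz
    · exact absurd (hsucc.trans hself) hmirror

end SectorToResidue

/-- for odd `d ≥ 3` and even `n ≥ 2`, the number of loopless generalized
chord diagrams of order `(n,d)` invariant under `i ↦ 1−i` equals `ã(n·d/2,0;2,d)`. -/
theorem reflection_no_fixed_point_odd_d (d : ℕ) (hd : 3 ≤ d) (hdo : Odd d)
    (n : ℕ) (hn : 2 ≤ n) (hne : Even n) :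
    Set.ncard {P : Finset (Finset (ZMod (n * d))) |
        IsChordDiagram (n * d) d P ∧ ChordLoopless (n * d) P ∧
          ∀ b ∈ P, b.image (fun i => 1 - i) ∈ P} =
      numAtil d 2 (n * d / 2) 0 := by
  obtain ⟨v, hv⟩ : 2 ∣ n * d := (hne.mul_right d).two_dvd
  have hv0 : NeZero v := ⟨by rintro rfl; simp only [mul_zero, Nat.mul_eq_zero] at hv; omega⟩
  rw [hv, Nat.mul_div_cancel_left v two_pos, numAtil,
    setOf_loopless_reflectionInvariant_eq (even_two_mul v) hdo, setOf_loopless_twoSymmetric_eq]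
  exact (bijOn_image_image_symmDiagrams bijOn_sectorToResidue mapsTo_shiftMod
    sectorToResidue_shiftMod sectorSucc_iff).ncard_eq.symm
end

section
/- Fix an odd integer d ≥ 3 and an odd integer n ≥ 3. The number of loopless generalized chord diagrams of order (n,d) that are invariant under the reflection i ↦ −i (mod n·d) (a reflection with exactly one fixed point, since n·d is odd) equals Σ_{k=0}^{(d−1)/2} C(d(n−1)/2 − 1 − k, (d−1)/2 − k) · ã(d(n−1)/2, k; 2, d). -/
/-!
In a diagram invariant under negation, the block of `0` is symmetric, hence of the form
`{0} ∪ ±S` with `S ⊆ {1, …, M}`, where `n * d = 2 * M + 1` and `#S = h = (d - 1) / 2`. It has no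
loop exactly when `S` avoids `1` and `M` and contains no two consecutive points, that is, when its
points sit in distinct gaps between consecutive points of `{1, …, M} \ S`; write `T` for this
`h`-subset of the `v - 1 = M - h - 1` gaps. Delete the block of `0` and number the other points by
`1, …, v` on the positive side and by `v + 1, …, 2v`, in order of absolute value, on the negative
side. Negation becomes the shift by `v`, so the remaining blocks form a `2`-symmetric linear
diagram, and its first-sector loops are harmless exactly when they lie in `T`. The only other
possible loop, at the wrap-around, would put `v` and `2v` into one block, which would then be
invariant under the fixed-point-free involution and have even size. A diagram with `k` loops per
sector thus arises from `C(v - 1 - k, h - k)` choices of `T`.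
-/

namespace ReflectedDiagram

open Finset

section UniformPartition

variable {α β : Type*}

/-- Partitions `P` of the finite set `X` into blocks of size `d`, with the clauses arranged so that
`IsLinearDiagram N d` is definitionally `IsUniformPartition d (Icc 1 N)`. -/
def IsUniformPartition (d : ℕ) (X : Finset α) (P : Finset (Finset α)) : Prop :=
  (∀ b ∈ P, #b = d) ∧ (∀ b ∈ P, b ⊆ X) ∧ ∀ x ∈ X, ∃! b, b ∈ P ∧ x ∈ b

namespace IsUniformPartition

variable {d : ℕ} {X : Finset α} {P : Finset (Finset α)}

lemma subset_powerset (hP : IsUniformPartition d X P) : P ⊆ X.powerset :=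
  fun b hb ↦ mem_powerset.2 (hP.2.1 b hb)

lemma eq_of_mem (hP : IsUniformPartition d X P) {b c : Finset α} (hb : b ∈ P) (hc : c ∈ P)
    {x : α} (hxb : x ∈ b) (hxc : x ∈ c) : b = c :=
  (hP.2.2 x (hP.2.1 b hb hxb)).unique ⟨hb, hxb⟩ ⟨hc, hxc⟩

end IsUniformPartition

variable [DecidableEq β]

/-- The family obtained from `Q` by relabelling points through `f` and adding the block `B`. -/
def adjoinBlock (B : Finset β) (f : α → β) (Q : Finset (Finset α)) : Finset (Finset β) :=
  insert B (Q.image (·.image f))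

variable {d : ℕ} {X : Finset α} {B : Finset β} {f : α → β} {Q : Finset (Finset α)}

lemma mem_adjoinBlock_self : B ∈ adjoinBlock B f Q := mem_insert_self _ _

lemma forall_mem_adjoinBlock {p : Finset β → Prop} :
    (∀ c ∈ adjoinBlock B f Q, p c) ↔ p B ∧ ∀ b ∈ Q, p (b.image f) := by
  simp [adjoinBlock]

lemma ne_image_of_disjoint (hB : B.Nonempty) (hdisj : Disjoint B (X.image f)) {b : Finset α}
    (hb : b ⊆ X) : B ≠ b.image f := by
  rintro rfl
  exact hB.ne_empty (disjoint_self_iff_empty _ |>.1 (hdisj.mono_right (image_subset_image hb)))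

lemma image_mem_adjoinBlock_iff (hf : Set.InjOn f X) (hB : B.Nonempty)
    (hdisj : Disjoint B (X.image f)) (hQ : Q ⊆ X.powerset) {b : Finset α} (hb : b ⊆ X) :
    b.image f ∈ adjoinBlock B f Q ↔ b ∈ Q := by
  rw [adjoinBlock, mem_insert, or_iff_right (ne_image_of_disjoint hB hdisj hb).symm, mem_image]
  refine ⟨fun ⟨c, hc, hcb⟩ ↦ ?_, fun hb ↦ ⟨b, hb, rfl⟩⟩
  have hcb : c = b :=
    image_injOn_powerset_of_injOn hf (mem_coe.2 (hQ hc)) (mem_coe.2 (mem_powerset.2 hb)) hcb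
  exact hcb ▸ hc

lemma adjoinBlock_injOn (hf : Set.InjOn f X) (hB : B.Nonempty)
    (hdisj : Disjoint B (X.image f)) : Set.InjOn (adjoinBlock B f) {Q | Q ⊆ X.powerset} := by
  intro Q hQ Q' hQ' h
  ext b
  by_cases hb : b ⊆ X
  · rw [← image_mem_adjoinBlock_iff hf hB hdisj hQ hb, h,
      image_mem_adjoinBlock_iff hf hB hdisj hQ' hb]
  · exact iff_of_false (fun h ↦ hb (mem_powerset.1 (hQ h))) fun h ↦ hb (mem_powerset.1 (hQ' h))

lemma mem_image_iff_of_injOn (hf : Set.InjOn f X) {b : Finset α} (hb : b ⊆ X) {x : α}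
    (hx : x ∈ X) : f x ∈ b.image f ↔ x ∈ b := by
  rw [← mem_coe, coe_image, hf.mem_image_iff (coe_subset.2 hb) hx, mem_coe]

lemma existsUnique_mem_adjoinBlock_iff (hf : Set.InjOn f X) (hdisj : Disjoint B (X.image f))
    (hQ : Q ⊆ X.powerset) {x : α} (hx : x ∈ X) :
    (∃! c, c ∈ adjoinBlock B f Q ∧ f x ∈ c) ↔ ∃! b, b ∈ Q ∧ x ∈ b := by
  have hxB : f x ∉ B := fun h ↦ disjoint_left.1 hdisj h (mem_image_of_mem f hx)
  have hmem : ∀ b ∈ Q, f x ∈ b.image f ↔ x ∈ b := fun b hb ↦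
    mem_image_iff_of_injOn hf (mem_powerset.1 (hQ hb)) hx
  constructor
  · rintro ⟨c, ⟨hc, hxc⟩, huniq⟩
    obtain rfl | hc := mem_insert.1 hc
    · exact absurd hxc hxB
    obtain ⟨b, hb, rfl⟩ := mem_image.1 hc
    refine ⟨b, ⟨hb, (hmem b hb).1 hxc⟩, fun b' ⟨hb', hxb'⟩ ↦ ?_⟩
    exact image_injOn_powerset_of_injOn hf (mem_coe.2 (hQ hb')) (mem_coe.2 (hQ hb)) <| huniq _
      ⟨mem_insert_of_mem (mem_image_of_mem _ hb'), (hmem b' hb').2 hxb'⟩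
  · rintro ⟨b, ⟨hb, hxb⟩, huniq⟩
    refine ⟨b.image f, ⟨mem_insert_of_mem (mem_image_of_mem _ hb), mem_image_of_mem f hxb⟩, ?_⟩
    rintro c ⟨hc, hxc⟩
    obtain rfl | hc := mem_insert.1 hc
    · exact absurd hxc hxB
    obtain ⟨b', hb', rfl⟩ := mem_image.1 hc
    rw [huniq b' ⟨hb', (hmem b' hb').1 hxc⟩]

lemma existsUnique_mem_adjoinBlock_of_mem (hdisj : Disjoint B (X.image f))
    (hQ : Q ⊆ X.powerset) {y : β} (hy : y ∈ B) : ∃! c, c ∈ adjoinBlock B f Q ∧ y ∈ c := by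
  refine ⟨B, ⟨mem_adjoinBlock_self, hy⟩, ?_⟩
  rintro c ⟨hc, hyc⟩
  obtain rfl | hc := mem_insert.1 hc
  · rfl
  obtain ⟨b, hb, rfl⟩ := mem_image.1 hc
  exact absurd (image_subset_image (mem_powerset.1 (hQ hb)) hyc) (disjoint_left.1 hdisj hy)

lemma isUniformPartition_adjoinBlock_iff (hf : Set.InjOn f X) (hdisj : Disjoint B (X.image f))
    (hcard : #B = d) (hQ : Q ⊆ X.powerset) :
    IsUniformPartition d (B ∪ X.image f) (adjoinBlock B f Q) ↔ IsUniformPartition d X Q := by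
  have hQX : ∀ b ∈ Q, b ⊆ X := fun b hb ↦ mem_powerset.1 (hQ hb)
  refine and_congr ?_ (and_congr (iff_of_true ?_ hQX) ?_)
  · rw [forall_mem_adjoinBlock, and_iff_right hcard]
    exact forall₂_congr fun b hb ↦ by
      rw [card_image_of_injOn (hf.mono (coe_subset.2 (hQX b hb)))]
  · rw [forall_mem_adjoinBlock]
    exact ⟨subset_union_left, fun b hb ↦ (image_subset_image (hQX b hb)).trans subset_union_right⟩
  · simp only [mem_union, or_imp, forall_and, forall_mem_image]
    rw [and_iff_right fun y hy ↦ existsUnique_mem_adjoinBlock_of_mem hdisj hQ hy]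
    exact forall₂_congr fun x hx ↦ existsUnique_mem_adjoinBlock_iff hf hdisj hQ hx

lemma exists_adjoinBlock_eq {P : Finset (Finset β)}
    (hP : IsUniformPartition d (B ∪ X.image f) P) (hBP : B ∈ P) :
    ∃ Q ⊆ X.powerset, adjoinBlock B f Q = P := by
  classical
  have hsub : P.erase B ⊆ X.powerset.image (·.image f) := by
    intro b hb
    obtain ⟨hne, hbP⟩ := mem_erase.1 hb
    have hbf : b ⊆ X.image f := fun x hx ↦
      (mem_union.1 (hP.2.1 b hbP hx)).resolve_left fun hxB ↦ hne (hP.eq_of_mem hbP hBP hx hxB)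
    obtain ⟨c, hcX, hc⟩ := subset_image_iff.1 hbf
    exact mem_image.2 ⟨c, mem_powerset.2 hcX, hc⟩
  obtain ⟨Q, hQ, hQP⟩ := subset_image_iff.1 hsub
  exact ⟨Q, hQ, by rw [adjoinBlock, hQP, insert_erase hBP]⟩

lemma adjoinBlock_invariant_iff [DecidableEq α] {σ : α → α} {τ : β → β} (hf : Set.InjOn f X)
    (hB : B.Nonempty) (hdisj : Disjoint B (X.image f)) (hσ : ∀ x ∈ X, σ x ∈ X)
    (hcomm : ∀ x ∈ X, f (σ x) = τ (f x)) (hτ : B.image τ = B) (hQ : Q ⊆ X.powerset) :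
    (∀ c ∈ adjoinBlock B f Q, c.image τ ∈ adjoinBlock B f Q) ↔ ∀ b ∈ Q, b.image σ ∈ Q := by
  rw [forall_mem_adjoinBlock, hτ, and_iff_right mem_adjoinBlock_self]
  refine forall₂_congr fun b hb ↦ ?_
  have hbX : b ⊆ X := mem_powerset.1 (hQ hb)
  have himage : (b.image f).image τ = (b.image σ).image f := by
    rw [image_image, image_image]
    exact image_congr fun x hx ↦ (hcomm x (hbX hx)).symm
  rw [himage, image_mem_adjoinBlock_iff hf hB hdisj hQ
    (image_subset_iff.2 fun x hx ↦ hσ x (hbX hx))]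

end UniformPartition

section Spread

variable {T : Finset ℕ}

/-- The order-preserving relabelling of `ℕ` that makes room for one new point immediately after
the image of each element of `T`. -/
def spread (T : Finset ℕ) (j : ℕ) : ℕ := j + Nat.count (· ∈ T) j

/-- The new points for which `spread T` makes room. -/
def insertedPoints (T : Finset ℕ) : Finset ℕ := T.image (spread T · + 1)

lemma spread_zero : spread T 0 = 0 := by simp [spread]

lemma spread_succ_of_mem {j : ℕ} (hj : j ∈ T) : spread T (j + 1) = spread T j + 2 := by
  simp only [spread, Nat.count_succ, hj, if_true]
  omega

lemma spread_succ_of_notMem {j : ℕ} (hj : j ∉ T) : spread T (j + 1) = spread T j + 1 := by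
  simp only [spread, Nat.count_succ, hj, if_false]
  omega

lemma spread_strictMono (T : Finset ℕ) : StrictMono (spread T) :=
  strictMono_id.add_monotone (Nat.count_monotone _)

lemma spread_injective (T : Finset ℕ) : Function.Injective (spread T) :=
  (spread_strictMono T).injective

lemma spread_eq_add_card {v : ℕ} (hT : ∀ t ∈ T, t < v) : spread T v = v + #T := by
  rw [spread, Nat.count_eq_card_filter_range, filter_mem_eq_inter,
    inter_eq_right.2 fun t ht ↦ mem_range.2 (hT t ht)]

lemma spread_insert_of_le {t j : ℕ} (hj : j ≤ t) : spread (insert t T) j = spread T j := by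
  simp only [spread, Nat.count_eq_card_filter_range]
  congr 2
  exact filter_congr fun x hx ↦ by simp [((mem_range.1 hx).trans_le hj).ne]

lemma eq_succ_of_spread_eq_succ {i j : ℕ} (h : spread T j = spread T i + 1) :
    j = i + 1 ∧ i ∉ T := by
  have hi : i ∉ T := by
    intro hi
    have hij : i < j := (spread_strictMono T).lt_iff_lt.1 (by omega)
    have hji : j < i + 1 := (spread_strictMono T).lt_iff_lt.1 (by rw [spread_succ_of_mem hi]; omega)
    omega
  exact ⟨spread_injective T (h.trans (spread_succ_of_notMem hi).symm), hi⟩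

lemma range_spread (T : Finset ℕ) : Set.range (spread T) = (↑(insertedPoints T))ᶜ := by
  ext a
  simp only [Set.mem_range, Set.mem_compl_iff, mem_coe, insertedPoints, mem_image]
  constructor
  · rintro ⟨j, rfl⟩ ⟨t, ht, h⟩
    exact (eq_succ_of_spread_eq_succ h.symm).2 ht
  · induction a with
    | zero => exact fun _ ↦ ⟨0, spread_zero⟩
    | succ a ih =>
      intro ha
      by_cases hmem : ∃ t ∈ T, spread T t + 1 = a
      · obtain ⟨t, ht, rfl⟩ := hmem
        exact ⟨t + 1, spread_succ_of_mem ht⟩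
      · obtain ⟨j, rfl⟩ := ih hmem
        exact ⟨j + 1, spread_succ_of_notMem fun hj ↦ ha ⟨j, hj, rfl⟩⟩

lemma spread_notMem_insertedPoints (j : ℕ) : spread T j ∉ insertedPoints T := by
  have := Set.mem_range_self (f := spread T) j
  rwa [range_spread] at this

lemma exists_spread_eq_of_notMem {a : ℕ} (ha : a ∉ insertedPoints T) : ∃ j, spread T j = a := by
  rw [← Set.mem_range, range_spread]
  exact ha

lemma insertedPoints_injective : Function.Injective insertedPoints := by
  intro T T' h
  have hspread : spread T = spread T' := by
    rw [← (spread_strictMono T).range_inj (spread_strictMono T'), range_spread, range_spread, h]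
  ext t
  have hmem (U : Finset ℕ) : t ∈ U ↔ spread U (t + 1) = spread U t + 2 :=
    ⟨spread_succ_of_mem, fun h ↦ by_contra fun ht ↦ by rw [spread_succ_of_notMem ht] at h; omega⟩
  rw [hmem T, hmem T', hspread]

lemma card_insertedPoints (T : Finset ℕ) : #(insertedPoints T) = #T :=
  card_image_of_injective _ fun _ _ h ↦ spread_injective T (Nat.succ_injective h)

lemma succ_notMem_insertedPoints {s : ℕ} (hs : s ∈ insertedPoints T) :
    s + 1 ∉ insertedPoints T := by
  obtain ⟨t, ht, rfl⟩ := mem_image.1 hs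
  rw [show spread T t + 1 + 1 = spread T (t + 1) from (spread_succ_of_mem ht).symm]
  exact spread_notMem_insertedPoints _

lemma insertedPoints_subset_Ico {v : ℕ} (hT : T ⊆ Ico 1 v) :
    insertedPoints T ⊆ Ico 2 (v + #T) := by
  intro s hs
  obtain ⟨t, ht, rfl⟩ := mem_image.1 hs
  obtain ⟨ht1, htv⟩ := mem_Ico.1 (hT ht)
  have hle : t ≤ spread T t := (spread_strictMono T).le_apply
  have hlt : spread T (t + 1) ≤ spread T v := (spread_strictMono T).monotone htv
  rw [spread_succ_of_mem ht, spread_eq_add_card fun t ht ↦ (mem_Ico.1 (hT ht)).2] at hlt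
  exact mem_Ico.2 ⟨by omega, by omega⟩

lemma exists_insertedPoints_eq (S : Finset ℕ) (hS : ∀ s ∈ S, s + 1 ∉ S) (v : ℕ)
    (hSv : S ⊆ Ico 2 (v + #S)) : ∃ T ⊆ Ico 1 v, #T = #S ∧ insertedPoints T = S := by
  induction S using Finset.induction_on_max generalizing v with
  | empty => exact ⟨∅, by simp [insertedPoints]⟩
  | insert a S hlt ih =>
    have haS : a ∉ S := fun ha ↦ (hlt a ha).false
    rw [card_insert_of_notMem haS] at hSv ⊢
    have ha := mem_Ico.1 (hSv (mem_insert_self a S))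
    -- In the relabelling that omits `S`, the point `a - 1` carries the label `t`.
    set t := a - 1 - #S with ht
    have hSt : S ⊆ Ico 2 (t + #S) := fun s hs ↦ by
      have hsa := hlt s hs
      have hne : s + 1 ≠ a := fun h ↦ hS s (mem_insert_of_mem hs) (h ▸ mem_insert_self _ _)
      have hs2 := mem_Ico.1 (hSv (mem_insert_of_mem hs))
      exact mem_Ico.2 ⟨hs2.1, by omega⟩
    obtain ⟨T, hT, hcard, rfl⟩ :=
      ih (fun s hs h ↦ hS s (mem_insert_of_mem hs) (mem_insert_of_mem h)) t hSt
    have htT : t ∉ T := fun h ↦ (mem_Ico.1 (hT h)).2.false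
    have ht1 : 1 ≤ t := by
      obtain rfl | ⟨u, hu⟩ := T.eq_empty_or_nonempty
      · simp only [card_empty] at hcard
        omega
      · have := mem_Ico.1 (hT hu)
        omega
    refine ⟨insert t T, insert_subset (mem_Ico.2 ⟨ht1, by omega⟩) fun u hu ↦ ?_, ?_, ?_⟩
    · have := mem_Ico.1 (hT hu)
      exact mem_Ico.2 ⟨this.1, by omega⟩
    · rw [card_insert_of_notMem htT, hcard]
    · have hat : spread (insert t T) t + 1 = a := by
        rw [spread_insert_of_le le_rfl, spread_eq_add_card fun u hu ↦ (mem_Ico.1 (hT hu)).2]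
        omega
      rw [insertedPoints, image_insert, hat]
      congr 1
      exact image_congr fun u hu ↦ by
        simp only [spread_insert_of_le (mem_Ico.1 (hT hu)).2.le]

end Spread

section CentralBlock

variable {M : ℕ} {S : Finset ℕ}

lemma valMinAbs_intCast {a : ℤ} (ha : a.natAbs ≤ M) :
    (a : ZMod (2 * M + 1)).valMinAbs = a :=
  (ZMod.valMinAbs_spec _ _).2 ⟨rfl, by push_cast; omega, by push_cast; omega⟩

lemma natAbs_valMinAbs_le (x : ZMod (2 * M + 1)) : x.valMinAbs.natAbs ≤ M :=
  x.natAbs_valMinAbs_le.trans (by omega)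

lemma natAbs_valMinAbs_natCast {a : ℕ} (ha : a ≤ M) :
    (a : ZMod (2 * M + 1)).valMinAbs.natAbs = a := by
  rw [← Int.cast_natCast, valMinAbs_intCast (by simpa using ha), Int.natAbs_natCast]

lemma natAbs_valMinAbs_eq_iff {a : ℕ} (ha : a ≤ M) {x : ZMod (2 * M + 1)} :
    x.valMinAbs.natAbs = a ↔ x = a ∨ x = -a := by
  rw [← ZMod.natAbs_valMinAbs_eq_natAbs_valMinAbs, natAbs_valMinAbs_natCast ha]

lemma valMinAbs_add_one {x : ZMod (2 * M + 1)} (hx : x.valMinAbs ≠ M) :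
    (x + 1).valMinAbs = x.valMinAbs + 1 := by
  have hle := natAbs_valMinAbs_le x
  nth_rw 1 [← x.coe_valMinAbs]
  rw [← Int.cast_one, ← Int.cast_add, valMinAbs_intCast (by omega)]

lemma valMinAbs_add_one_of_eq {x : ZMod (2 * M + 1)} (hx : x.valMinAbs = M) :
    (x + 1).valMinAbs = -M := by
  have hzero : ((2 * M + 1 : ℕ) : ZMod (2 * M + 1)) = 0 := ZMod.natCast_self _
  have hcast : x + 1 = ((-M : ℤ) : ZMod (2 * M + 1)) := by
    rw [← x.coe_valMinAbs, hx]
    push_cast at hzero ⊢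
    linear_combination hzero
  rw [hcast, valMinAbs_intCast (by simp)]

/-- The candidate for the block of `0` in a diagram on `ZMod (2 * M + 1)` invariant under negation:
it consists of `0` and the residues `±s` with `s ∈ S`. -/
def centralBlock (M : ℕ) (S : Finset ℕ) : Finset (ZMod (2 * M + 1)) :=
  {x | x.valMinAbs.natAbs ∈ insert 0 S}

lemma mem_centralBlock {x : ZMod (2 * M + 1)} :
    x ∈ centralBlock M S ↔ x.valMinAbs = 0 ∨ x.valMinAbs.natAbs ∈ S := by
  simp [centralBlock]

lemma zero_mem_centralBlock : (0 : ZMod (2 * M + 1)) ∈ centralBlock M S := by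
  simp [centralBlock]

lemma image_neg_centralBlock :
    (centralBlock M S).image (fun i ↦ -i) = centralBlock M S := by
  have hneg : ∀ x ∈ centralBlock M S, -x ∈ centralBlock M S := fun x hx ↦ by
    rw [centralBlock, mem_filter_univ] at hx ⊢
    rwa [ZMod.natAbs_valMinAbs_neg]
  exact (image_subset_iff.2 hneg).antisymm fun x hx ↦ mem_image.2 ⟨-x, hneg x hx, neg_neg x⟩

lemma natCast_mem_centralBlock_iff {a : ℕ} (ha : a ∈ Icc 1 M) :
    (a : ZMod (2 * M + 1)) ∈ centralBlock M S ↔ a ∈ S := by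
  obtain ⟨h1, hM⟩ := mem_Icc.1 ha
  rw [centralBlock, mem_filter_univ, natAbs_valMinAbs_natCast hM, mem_insert,
    or_iff_right (by omega)]

lemma centralBlock_injOn : Set.InjOn (centralBlock M) {S | S ⊆ Icc 1 M} := by
  intro S hS S' hS' h
  ext a
  by_cases ha : a ∈ Icc 1 M
  · rw [← natCast_mem_centralBlock_iff ha, h, natCast_mem_centralBlock_iff ha]
  · exact iff_of_false (fun h ↦ ha (hS h)) fun h ↦ ha (hS' h)

lemma card_filter_natAbs_valMinAbs_eq {a : ℕ} (ha : a ∈ Icc 1 M) :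
    #{x : ZMod (2 * M + 1) | x.valMinAbs.natAbs = a} = 2 := by
  obtain ⟨h1, hM⟩ := mem_Icc.1 ha
  have hne : (a : ZMod (2 * M + 1)) ≠ -a := by
    intro h
    have h2 : ((2 * a : ℕ) : ZMod (2 * M + 1)) = 0 := by
      push_cast
      linear_combination h
    have := Nat.le_of_dvd (by omega) ((ZMod.natCast_eq_zero_iff _ _).1 h2)
    omega
  have hpair : ({x | x.valMinAbs.natAbs = a} : Finset (ZMod (2 * M + 1))) = {↑a, -↑a} := by
    ext x
    rw [mem_filter_univ, natAbs_valMinAbs_eq_iff hM, mem_insert, mem_singleton]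
  rw [hpair, card_pair hne]

lemma card_centralBlock (hS : S ⊆ Icc 1 M) : #(centralBlock M S) = 2 * #S + 1 := by
  have h0 : 0 ∉ S := fun h ↦ by simpa using hS h
  have hfiber (a : ℕ) (ha : a ∈ insert 0 S) :
      #{x ∈ centralBlock M S | x.valMinAbs.natAbs = a} =
        #{x : ZMod (2 * M + 1) | x.valMinAbs.natAbs = a} := by
    congr 1
    ext x
    simp only [centralBlock, mem_filter, mem_univ, true_and]
    exact and_iff_right_of_imp fun hx ↦ hx ▸ ha
  rw [card_eq_sum_card_fiberwise (s := centralBlock M S) (t := insert 0 S)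
    (f := fun x ↦ x.valMinAbs.natAbs) fun x hx ↦ mem_coe.2 ((mem_filter_univ x).1 hx),
    sum_congr rfl hfiber, sum_insert h0,
    sum_congr rfl fun a ha ↦ card_filter_natAbs_valMinAbs_eq (hS ha), sum_const, smul_eq_mul]
  have hzero : #{x : ZMod (2 * M + 1) | x.valMinAbs.natAbs = 0} = 1 := by
    simp [filter_eq']
  omega

lemma exists_centralBlock_eq {B : Finset (ZMod (2 * M + 1))} (h0 : 0 ∈ B)
    (hneg : ∀ x ∈ B, -x ∈ B) : ∃ S ⊆ Icc 1 M, centralBlock M S = B := by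
  refine ⟨{a ∈ Icc 1 M | (a : ZMod (2 * M + 1)) ∈ B}, filter_subset _ _, ?_⟩
  ext x
  have habs : (x.valMinAbs.natAbs : ZMod (2 * M + 1)) ∈ B ↔ x ∈ B := by
    obtain h | h := (natAbs_valMinAbs_eq_iff (natAbs_valMinAbs_le x)).1 rfl
    · rw [← h]
    · nth_rw 2 [h]
      exact ⟨hneg _, fun h ↦ neg_neg (x.valMinAbs.natAbs : ZMod (2 * M + 1)) ▸ hneg _ h⟩
  rw [mem_centralBlock, mem_filter, habs, mem_Icc, and_iff_left (natAbs_valMinAbs_le x),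
    Nat.one_le_iff_ne_zero, Int.natAbs_ne_zero]
  by_cases hx : x.valMinAbs = 0
  · rw [(ZMod.valMinAbs_eq_zero x).1 hx]
    simpa using h0
  · simp [hx]

lemma separated_of_centralBlock_loopless (hS : S ⊆ Icc 1 M)
    (hloopless : ∀ x ∈ centralBlock M S, x + 1 ∉ centralBlock M S) :
    S ⊆ Ico 2 M ∧ ∀ s ∈ S, s + 1 ∉ S := by
  simp only [mem_centralBlock] at hloopless
  have hcast {a : ℕ} (ha : a ≤ M) : (a : ZMod (2 * M + 1)).valMinAbs = a :=
    valMinAbs_intCast (a := a) (by simpa using ha)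
  have hsucc (s : ℕ) (hs : s ∈ insert 0 S) : s + 1 ∉ S := fun h ↦ by
    have hsM := (mem_Icc.1 (hS h)).2
    refine hloopless s ?_ ?_
    · rw [hcast (by omega)]
      simpa using hs
    · rw [← Nat.cast_succ, hcast hsM]
      exact .inr h
  have htop : M ∉ S := fun h ↦ hloopless M (.inr (by rwa [hcast le_rfl, Int.natAbs_natCast]))
    (.inr (by rwa [valMinAbs_add_one_of_eq (hcast le_rfl), Int.natAbs_neg, Int.natAbs_natCast]))
  refine ⟨fun s hs ↦ mem_Ico.2 ?_, fun s hs ↦ hsucc s (mem_insert_of_mem hs)⟩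
  have hone : s ≠ 1 := fun h ↦ hsucc 0 (mem_insert_self 0 S) (by rwa [zero_add, ← h])
  have hM : s ≠ M := fun h ↦ htop (h ▸ hs)
  have := mem_Icc.1 (hS hs)
  omega

lemma centralBlock_loopless_of_separated (hM : 0 < M) (hSM : S ⊆ Ico 2 M)
    (hsucc : ∀ s ∈ S, s + 1 ∉ S) : ∀ x ∈ centralBlock M S, x + 1 ∉ centralBlock M S := by
  simp only [mem_centralBlock]
  intro x hx hx1
  have hmem (a : ℕ) (ha : a ∈ S) : 2 ≤ a ∧ a < M ∧ a + 1 ∉ S :=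
    ⟨(mem_Ico.1 (hSM ha)).1, (mem_Ico.1 (hSM ha)).2, hsucc a ha⟩
  by_cases hxM : x.valMinAbs = M
  · have := hx.imp id (hmem _)
    omega
  rw [valMinAbs_add_one hxM] at hx1
  obtain hx0 | hxS := hx
  · have := hx1.imp id (hmem _)
    omega
  obtain hx0 | hx1S := hx1
  · have := hmem _ hxS
    omega
  have hcons : (x.valMinAbs + 1).natAbs = x.valMinAbs.natAbs + 1 ∨
      x.valMinAbs.natAbs = (x.valMinAbs + 1).natAbs + 1 := by omega
  obtain h | h := hcons
  · exact (hmem _ hxS).2.2 (h ▸ hx1S)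
  · exact (hmem _ hx1S).2.2 (h ▸ hxS)

end CentralBlock

section SignedLabel

variable {v h : ℕ} {T : Finset ℕ}

/-- The signed label of the point `j ∈ {1, …, 2v}`: the first sector carries the positive labels
that are not in `insertedPoints T`, the second sector their negatives. -/
def signedLabel (v : ℕ) (T : Finset ℕ) (j : ℕ) : ℤ :=
  if j ≤ v then spread T j else -spread T (j - v)

lemma signedLabel_of_le {k : ℕ} (hk : k ≤ v) : signedLabel v T k = spread T k := if_pos hk

lemma signedLabel_add {k : ℕ} (hk : 1 ≤ k) : signedLabel v T (k + v) = -spread T k := by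
  rw [signedLabel, if_neg (by omega), Nat.add_sub_cancel]

lemma eq_or_eq_add_of_mem_Icc {j : ℕ} (hj : j ∈ Icc 1 (2 * v)) :
    ∃ k, 1 ≤ k ∧ k ≤ v ∧ (j = k ∨ j = k + v) := by
  rw [mem_Icc] at hj
  by_cases hjv : j ≤ v
  · exact ⟨j, hj.1, hjv, .inl rfl⟩
  · exact ⟨j - v, by omega, by omega, .inr (by omega)⟩

lemma shiftMod_mem_Icc {j : ℕ} (hj : j ∈ Icc 1 (2 * v)) :
    shiftMod (2 * v) v j ∈ Icc 1 (2 * v) := by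
  rw [mem_Icc] at hj ⊢
  unfold shiftMod
  split_ifs <;> omega

lemma signedLabel_shiftMod {j : ℕ} (hj : j ∈ Icc 1 (2 * v)) :
    signedLabel v T (shiftMod (2 * v) v j) = -signedLabel v T j := by
  obtain ⟨k, hk1, hkv, rfl | rfl⟩ := eq_or_eq_add_of_mem_Icc hj
  · rw [shiftMod, if_pos (by omega), signedLabel_of_le hkv, signedLabel_add hk1]
  · rw [shiftMod, if_neg (by omega), show k + v + v - 2 * v = k by omega, signedLabel_of_le hkv,
      signedLabel_add hk1, neg_neg]

lemma exists_natAbs_signedLabel_eq {j : ℕ} (hj : j ∈ Icc 1 (2 * v)) :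
    ∃ k, 1 ≤ k ∧ k ≤ v ∧ (signedLabel v T j).natAbs = spread T k := by
  obtain ⟨k, hk1, hkv, rfl | rfl⟩ := eq_or_eq_add_of_mem_Icc hj
  · exact ⟨j, hk1, hkv, by rw [signedLabel_of_le hkv, Int.natAbs_natCast]⟩
  · exact ⟨k, hk1, hkv, by rw [signedLabel_add hk1, Int.natAbs_neg, Int.natAbs_natCast]⟩

lemma signedLabel_injOn : Set.InjOn (signedLabel v T) (Icc 1 (2 * v)) := by
  intro i hi j hj hij
  obtain ⟨k, hk1, hkv, rfl | rfl⟩ := eq_or_eq_add_of_mem_Icc hi <;>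
  obtain ⟨l, hl1, hlv, rfl | rfl⟩ := eq_or_eq_add_of_mem_Icc hj <;>
  simp only [signedLabel_of_le, signedLabel_add, *] at hij
  · exact spread_injective T (by omega)
  · have := (spread_strictMono T).le_apply (x := i)
    omega
  · have := (spread_strictMono T).le_apply (x := j)
    omega
  · rw [spread_injective T (show spread T k = spread T l by omega)]

lemma spread_top (hT : T ∈ powersetCard h (Ico 1 v)) : spread T v = v + h := by
  rw [mem_powersetCard] at hT
  rw [spread_eq_add_card fun t ht ↦ (mem_Ico.1 (hT.1 ht)).2, hT.2]

lemma natAbs_signedLabel_mem_Icc (hT : T ∈ powersetCard h (Ico 1 v)) {j : ℕ}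
    (hj : j ∈ Icc 1 (2 * v)) : (signedLabel v T j).natAbs ∈ Icc 1 (v + h) := by
  obtain ⟨k, hk1, hkv, hk⟩ := exists_natAbs_signedLabel_eq (T := T) hj
  rw [hk, ← spread_top hT, mem_Icc]
  exact ⟨hk1.trans (spread_strictMono T).le_apply, (spread_strictMono T).monotone hkv⟩

lemma natAbs_signedLabel_notMem {j : ℕ} (hj : j ∈ Icc 1 (2 * v)) :
    (signedLabel v T j).natAbs ∉ insertedPoints T := by
  obtain ⟨k, -, -, hk⟩ := exists_natAbs_signedLabel_eq (T := T) hj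
  exact hk ▸ spread_notMem_insertedPoints k

lemma exists_signedLabel_eq (hT : T ∈ powersetCard h (Ico 1 v)) {a : ℤ}
    (ha : a.natAbs ∈ Icc 1 (v + h)) (haT : a.natAbs ∉ insertedPoints T) :
    ∃ j ∈ Icc 1 (2 * v), signedLabel v T j = a := by
  obtain ⟨k, hk⟩ := exists_spread_eq_of_notMem haT
  rw [← hk, ← spread_top hT, mem_Icc, (spread_strictMono T).le_iff_le] at ha
  have hk1 : 1 ≤ k := Nat.one_le_iff_ne_zero.2 (by rintro rfl; simp [spread_zero] at ha)
  obtain hpos | hneg := le_total 0 a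
  · exact ⟨k, mem_Icc.2 ⟨hk1, by omega⟩, by rw [signedLabel_of_le ha.2]; omega⟩
  · exact ⟨k + v, mem_Icc.2 ⟨by omega, by omega⟩, by rw [signedLabel_add hk1]; omega⟩

/-- `signedLabel` read modulo `2 * (v + h) + 1`. -/
def residueLabel (v h : ℕ) (T : Finset ℕ) (j : ℕ) : ZMod (2 * (v + h) + 1) := signedLabel v T j

lemma valMinAbs_residueLabel (hT : T ∈ powersetCard h (Ico 1 v)) {j : ℕ}
    (hj : j ∈ Icc 1 (2 * v)) : (residueLabel v h T j).valMinAbs = signedLabel v T j :=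
  valMinAbs_intCast (mem_Icc.1 (natAbs_signedLabel_mem_Icc hT hj)).2

lemma residueLabel_injOn (hT : T ∈ powersetCard h (Ico 1 v)) :
    Set.InjOn (residueLabel v h T) (Icc 1 (2 * v)) := by
  intro i hi j hj hij
  apply signedLabel_injOn hi hj
  rw [← valMinAbs_residueLabel hT hi, hij, valMinAbs_residueLabel hT hj]

lemma residueLabel_shiftMod {j : ℕ} (hj : j ∈ Icc 1 (2 * v)) :
    residueLabel v h T (shiftMod (2 * v) v j) = -residueLabel v h T j := by
  rw [residueLabel, signedLabel_shiftMod hj, Int.cast_neg, residueLabel]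

lemma image_residueLabel (hT : T ∈ powersetCard h (Ico 1 v)) :
    (Icc 1 (2 * v)).image (residueLabel v h T) = (centralBlock (v + h) (insertedPoints T))ᶜ := by
  ext x
  rw [mem_image, mem_compl, mem_centralBlock, not_or]
  constructor
  · rintro ⟨j, hj, rfl⟩
    rw [valMinAbs_residueLabel hT hj, ← Int.natAbs_eq_zero]
    have := mem_Icc.1 (natAbs_signedLabel_mem_Icc hT hj)
    exact ⟨by omega, natAbs_signedLabel_notMem hj⟩
  · rintro ⟨hx0, hxT⟩
    obtain ⟨j, hj, hjx⟩ := exists_signedLabel_eq hT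
      (mem_Icc.2 ⟨Int.natAbs_pos.2 hx0, natAbs_valMinAbs_le x⟩) hxT
    exact ⟨j, hj, by rw [residueLabel, hjx, ZMod.coe_valMinAbs]⟩

lemma residueLabel_add_one {j : ℕ} (hjv : j < v) (hjT : j ∉ T) :
    residueLabel v h T (j + 1) = residueLabel v h T j + 1 := by
  rw [residueLabel, residueLabel, signedLabel_of_le hjv, signedLabel_of_le hjv.le,
    spread_succ_of_notMem hjT]
  push_cast
  rfl

lemma eq_of_residueLabel_eq_add_one (hT : T ∈ powersetCard h (Ico 1 v)) {i j : ℕ}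
    (hi : i ∈ Icc 1 (2 * v)) (hj : j ∈ Icc 1 (2 * v))
    (hij : residueLabel v h T j = residueLabel v h T i + 1) :
    (∃ k ∈ Ico 1 v, k ∉ T ∧ (i = k ∧ j = k + 1 ∨ i = k + v + 1 ∧ j = k + v)) ∨
      i = v ∧ j = 2 * v := by
  have hval := congrArg ZMod.valMinAbs hij
  have hle (k : ℕ) : k ≤ spread T k := (spread_strictMono T).le_apply
  have htop (k : ℕ) (hk : spread T k = v + h) : k = v :=
    spread_injective T (hk.trans (spread_top hT).symm)
  rw [valMinAbs_residueLabel hT hj] at hval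
  by_cases hwrap : (residueLabel v h T i).valMinAbs = ↑(v + h)
  · rw [valMinAbs_add_one_of_eq hwrap] at hval
    rw [valMinAbs_residueLabel hT hi] at hwrap
    right
    obtain ⟨k, hk1, hkv, rfl | rfl⟩ := eq_or_eq_add_of_mem_Icc hi <;>
    obtain ⟨l, hl1, hlv, rfl | rfl⟩ := eq_or_eq_add_of_mem_Icc hj <;>
    simp only [signedLabel_of_le, signedLabel_add, *] at hval hwrap
    · omega
    · have := htop i (by omega)
      have := htop l (by omega)
      omega
    · omega
    · omega
  · rw [valMinAbs_add_one hwrap, valMinAbs_residueLabel hT hi] at hval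
    left
    obtain ⟨k, hk1, hkv, rfl | rfl⟩ := eq_or_eq_add_of_mem_Icc hi <;>
    obtain ⟨l, hl1, hlv, rfl | rfl⟩ := eq_or_eq_add_of_mem_Icc hj <;>
    simp only [signedLabel_of_le, signedLabel_add, *] at hval
    · obtain ⟨rfl, hiT⟩ := eq_succ_of_spread_eq_succ (show spread T j = spread T i + 1 by omega)
      exact ⟨i, mem_Ico.2 ⟨hk1, hlv⟩, hiT, .inl ⟨rfl, rfl⟩⟩
    · have := hle i
      omega
    · have := hle k
      have := hle j
      omega
    · obtain ⟨rfl, hlT⟩ := eq_succ_of_spread_eq_succ (show spread T k = spread T l + 1 by omega)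
      exact ⟨l, mem_Ico.2 ⟨hl1, hkv⟩, hlT, .inr ⟨by omega, rfl⟩⟩

end SignedLabel

section SymmetricDiagram

variable {d m v k i : ℕ} {Q : Finset (Finset ℕ)}

/-- The points `i` and `i + 1` lie in the same block of `Q`. -/
def IsLoop (Q : Finset (Finset ℕ)) (i : ℕ) : Prop := ∃ b ∈ Q, i ∈ b ∧ i + 1 ∈ b

open Classical in
/-- The loops of `Q` in the first sector `{1, …, v}`. -/
noncomputable def firstSectorLoops (v : ℕ) (Q : Finset (Finset ℕ)) : Finset ℕ :=
  {i ∈ Ico 1 v | IsLoop Q i}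

lemma mem_firstSectorLoops : i ∈ firstSectorLoops v Q ↔ i ∈ Ico 1 v ∧ IsLoop Q i := by
  simp [firstSectorLoops]

lemma firstSectorLoops_subset_Ico : firstSectorLoops v Q ⊆ Ico 1 v :=
  fun _ hi ↦ (mem_firstSectorLoops.1 hi).1

lemma isUniformPartition_Icc_iff :
    IsUniformPartition d (Icc 1 m) Q ↔ IsLinearDiagram m d Q := Iff.rfl

lemma finite_setOf_isMSymLinear (d m v : ℕ) : {Q | IsMSymLinear d m v Q}.Finite :=
  (Icc 1 (m * v)).powerset.powerset.finite_toSet.subset fun _ hQ ↦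
    mem_coe.2 (mem_powerset.2 (isUniformPartition_Icc_iff.2 hQ.1).subset_powerset)

lemma isLoop_add_iff (hQ : IsMSymLinear d m v Q) (hi : 1 ≤ i) (him : i + 1 + v ≤ m * v) :
    IsLoop Q (i + v) ↔ IsLoop Q i := by
  have hP := isUniformPartition_Icc_iff.2 hQ.1
  constructor
  · rintro ⟨c, hc, hic, hic1⟩
    obtain ⟨b, ⟨hb, hib⟩, -⟩ := hP.2.2 i (mem_Icc.2 ⟨hi, by omega⟩)
    have hmem : i + v ∈ b.image (shiftMod (m * v) v) :=
      mem_image.2 ⟨i, hib, if_pos (by omega)⟩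
    rw [hP.eq_of_mem hc (hQ.2 b hb) hic hmem] at hic1
    obtain ⟨x, hxb, hx⟩ := mem_image.1 hic1
    have hxm := mem_Icc.1 (hP.2.1 b hb hxb)
    have hxi : x = i + 1 := by
      unfold shiftMod at hx
      split_ifs at hx <;> omega
    exact ⟨b, hb, hib, hxi ▸ hxb⟩
  · rintro ⟨b, hb, hib, hib1⟩
    exact ⟨_, hQ.2 b hb, mem_image.2 ⟨i, hib, if_pos (by omega)⟩,
      mem_image.2 ⟨i + 1, hib1, (if_pos him).trans (by omega)⟩⟩

lemma sectorLoops_zero : sectorLoops v Q 0 = #(firstSectorLoops v Q) := by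
  rw [sectorLoops, ← Set.ncard_coe_finset]
  congr 1
  ext i
  simp only [Set.mem_ofPred_eq, mem_coe, mem_firstSectorLoops, mem_Ico, IsLoop]
  simp [Nat.succ_le_iff, and_assoc]

lemma sectorLoops_succ (hQ : IsMSymLinear d m v Q) {s : ℕ} (hs : s + 1 < m) :
    sectorLoops v Q (s + 1) = sectorLoops v Q s := by
  have hsv : (s + 1 + 1) * v ≤ m * v := Nat.mul_le_mul_right v hs
  rw [eq_comm, sectorLoops, sectorLoops, ← Set.ncard_image_of_injective _ (add_left_injective v)]
  congr 1
  ext j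
  simp only [Set.mem_ofPred_eq, Set.mem_image]
  constructor
  · rintro ⟨i, ⟨hi, his, hloop⟩, rfl⟩
    exact ⟨by lia, by lia, (isLoop_add_iff hQ (by lia) (by lia)).2 hloop⟩
  · rintro ⟨hj, hjs, hloop⟩
    obtain ⟨i, rfl⟩ := Nat.exists_eq_add_of_le' (show v ≤ j by lia)
    exact ⟨i, ⟨by lia, by lia, (isLoop_add_iff hQ (by lia) (by lia)).1 hloop⟩, rfl⟩

lemma numAtil_eq_ncard (hm : 0 < m) :
    numAtil d m v k = {Q | IsMSymLinear d m v Q ∧ #(firstSectorLoops v Q) = k}.ncard := by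
  rw [numAtil]
  congr 1
  ext Q
  refine and_congr_right fun hQ ↦ ?_
  rw [← sectorLoops_zero]
  refine ⟨fun h ↦ h 0 hm, fun h s hs ↦ ?_⟩
  induction s with
  | zero => exact h
  | succ s ih => rw [sectorLoops_succ hQ hs, ih (by omega)]

lemma even_card_of_involution {α : Type*} {b : Finset α} (σ : α → α) (hσ : ∀ x ∈ b, σ x ∈ b)
    (hinv : ∀ x ∈ b, σ (σ x) = x) (hne : ∀ x ∈ b, σ x ≠ x) : Even #b := by
  have hsum : ∑ _x ∈ b, (1 : ZMod 2) = 0 := sum_involution (fun x _ ↦ σ x)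
    (fun _ _ ↦ by decide) (fun x hx _ ↦ hne x hx) hσ hinv
  rwa [sum_const, nsmul_one, ZMod.natCast_eq_zero_iff_even] at hsum

lemma shiftMod_notMem_of_mem (hd : Odd d) (hQ : IsMSymLinear d 2 v Q) {b : Finset ℕ}
    (hb : b ∈ Q) (hi : i ∈ b) : shiftMod (2 * v) v i ∉ b := by
  intro hib
  have hP := isUniformPartition_Icc_iff.2 hQ.1
  have himage : b.image (shiftMod (2 * v) v) = b :=
    hP.eq_of_mem (hQ.2 b hb) hb (mem_image_of_mem _ hi) hib
  have hshift : ∀ x ∈ b, shiftMod (2 * v) v (shiftMod (2 * v) v x) = x ∧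
      shiftMod (2 * v) v x ≠ x := by
    intro x hx
    have := mem_Icc.1 (hP.2.1 b hb hx)
    unfold shiftMod
    split_ifs <;> omega
  refine Nat.not_even_iff_odd.2 (hQ.1.1 b hb ▸ hd) (even_card_of_involution (shiftMod (2 * v) v)
    (fun x hx ↦ ?_) (fun x hx ↦ (hshift x hx).1) fun x hx ↦ (hshift x hx).2)
  exact himage.le (mem_image_of_mem _ hx)

end SymmetricDiagram

section ReflectionDiagram

variable {d h v : ℕ} {T T' : Finset ℕ} {Q Q' : Finset (Finset ℕ)}

/-- The chord diagram on `ZMod (2 * (v + h) + 1)` obtained from a diagram `Q` on `{1, …, 2v}` by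
spreading its points according to `T` and joining the remaining points into the block of `0`. -/
def reflectionDiagram (v h : ℕ) (T : Finset ℕ) (Q : Finset (Finset ℕ)) :
    Finset (Finset (ZMod (2 * (v + h) + 1))) :=
  adjoinBlock (centralBlock (v + h) (insertedPoints T)) (residueLabel v h T) Q

lemma centralBlock_nonempty {M : ℕ} {S : Finset ℕ} : (centralBlock M S).Nonempty :=
  ⟨0, zero_mem_centralBlock⟩

lemma disjoint_centralBlock_image (hT : T ∈ powersetCard h (Ico 1 v)) :
    Disjoint (centralBlock (v + h) (insertedPoints T))
      ((Icc 1 (2 * v)).image (residueLabel v h T)) :=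
  image_residueLabel hT ▸ disjoint_compl_right

lemma centralBlock_union_image (hT : T ∈ powersetCard h (Ico 1 v)) :
    centralBlock (v + h) (insertedPoints T) ∪ (Icc 1 (2 * v)).image (residueLabel v h T) =
      univ := by
  rw [image_residueLabel hT, union_compl]

lemma insertedPoints_subset_Icc (hT : T ∈ powersetCard h (Ico 1 v)) :
    insertedPoints T ⊆ Icc 1 (v + h) := by
  obtain ⟨hTv, rfl⟩ := mem_powersetCard.1 hT
  exact (insertedPoints_subset_Ico hTv).trans fun s hs ↦ by
    rw [mem_Ico] at hs
    exact mem_Icc.2 ⟨by omega, hs.2.le⟩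

lemma isUniformPartition_univ_iff {N : ℕ} [NeZero N] {P : Finset (Finset (ZMod N))} :
    IsUniformPartition d univ P ↔ IsChordDiagram N d P := by
  simp [IsUniformPartition, IsChordDiagram]

lemma isChordDiagram_reflectionDiagram_iff (hT : T ∈ powersetCard h (Ico 1 v))
    (hQ : Q ⊆ (Icc 1 (2 * v)).powerset) :
    IsChordDiagram (2 * (v + h) + 1) (2 * h + 1) (reflectionDiagram v h T Q) ↔
      IsLinearDiagram (2 * v) (2 * h + 1) Q := by
  have hcard : #(centralBlock (v + h) (insertedPoints T)) = 2 * h + 1 := by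
    rw [card_centralBlock (insertedPoints_subset_Icc hT), card_insertedPoints,
      (mem_powersetCard.1 hT).2]
  rw [← isUniformPartition_univ_iff, ← centralBlock_union_image hT, reflectionDiagram,
    isUniformPartition_adjoinBlock_iff (residueLabel_injOn hT) (disjoint_centralBlock_image hT)
      hcard hQ, isUniformPartition_Icc_iff]

lemma reflectionDiagram_neg_invariant_iff (hT : T ∈ powersetCard h (Ico 1 v))
    (hQ : Q ⊆ (Icc 1 (2 * v)).powerset) :
    (∀ b ∈ reflectionDiagram v h T Q, b.image (fun i ↦ -i) ∈ reflectionDiagram v h T Q) ↔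
      ∀ b ∈ Q, b.image (shiftMod (2 * v) v) ∈ Q :=
  adjoinBlock_invariant_iff (residueLabel_injOn hT) centralBlock_nonempty
    (disjoint_centralBlock_image hT) (fun _ ↦ shiftMod_mem_Icc)
    (fun _ ↦ residueLabel_shiftMod) image_neg_centralBlock hQ

lemma forall_image_residueLabel_loopless_iff (hT : T ∈ powersetCard h (Ico 1 v)) (hd : Odd d)
    (hQ : IsMSymLinear d 2 v Q) :
    (∀ b ∈ Q, ∀ x ∈ b.image (residueLabel v h T), x + 1 ∉ b.image (residueLabel v h T)) ↔
      firstSectorLoops v Q ⊆ T := by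
  have hP := isUniformPartition_Icc_iff.2 hQ.1
  simp only [forall_mem_image]
  constructor
  · intro hloopless k hk
    obtain ⟨hkv, b, hb, hkb, hkb1⟩ := mem_firstSectorLoops.1 hk
    by_contra hkT
    exact hloopless b hb hkb
      (residueLabel_add_one (mem_Ico.1 hkv).2 hkT ▸ mem_image_of_mem _ hkb1)
  · intro hsub b hb i hi hi1
    obtain ⟨j, hj, hij⟩ := mem_image.1 hi1
    obtain ⟨k, hk, hkT, hloop⟩ | ⟨rfl, rfl⟩ :=
      eq_of_residueLabel_eq_add_one hT (hP.2.1 b hb hi) (hP.2.1 b hb hj) hij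
    · refine hkT (hsub (mem_firstSectorLoops.2 ⟨hk, ?_⟩))
      rw [mem_Ico] at hk
      obtain ⟨rfl, rfl⟩ | ⟨rfl, rfl⟩ := hloop
      · exact ⟨b, hb, hi, hj⟩
      · exact (isLoop_add_iff hQ hk.1 (by omega)).1 ⟨b, hb, hj, hi⟩
    · refine shiftMod_notMem_of_mem hd hQ hb hi ?_
      rwa [shiftMod, if_pos (by omega), ← two_mul]

lemma chordLoopless_iff {N : ℕ} {P : Finset (Finset (ZMod N))} :
    ChordLoopless N P ↔ ∀ b ∈ P, ∀ x ∈ b, x + 1 ∉ b :=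
  ⟨fun h b hb x ↦ h x b hb, fun h x b hb ↦ h b hb x⟩

lemma chordLoopless_reflectionDiagram_iff (hM : 0 < v + h) (hT : T ∈ powersetCard h (Ico 1 v))
    (hd : Odd d) (hQ : IsMSymLinear d 2 v Q) :
    ChordLoopless (2 * (v + h) + 1) (reflectionDiagram v h T Q) ↔
      firstSectorLoops v Q ⊆ T := by
  have hcentral : ∀ x ∈ centralBlock (v + h) (insertedPoints T),
      x + 1 ∉ centralBlock (v + h) (insertedPoints T) := by
    obtain ⟨hTv, rfl⟩ := mem_powersetCard.1 hT
    exact centralBlock_loopless_of_separated hM (insertedPoints_subset_Ico hTv)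
      fun s ↦ succ_notMem_insertedPoints
  rw [chordLoopless_iff, reflectionDiagram, forall_mem_adjoinBlock, and_iff_right hcentral,
    forall_image_residueLabel_loopless_iff hT hd hQ]

lemma reflectionDiagram_inj (hT : T ∈ powersetCard h (Ico 1 v))
    (hT' : T' ∈ powersetCard h (Ico 1 v)) (hQ : IsLinearDiagram (2 * v) (2 * h + 1) Q)
    (hQ' : IsLinearDiagram (2 * v) (2 * h + 1) Q')
    (heq : reflectionDiagram v h T Q = reflectionDiagram v h T' Q') : T = T' ∧ Q = Q' := by
  have hsub := (isUniformPartition_Icc_iff.2 hQ).subset_powerset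
  have hP := isUniformPartition_univ_iff.2 ((isChordDiagram_reflectionDiagram_iff hT hsub).2 hQ)
  have hmem' : centralBlock (v + h) (insertedPoints T') ∈ reflectionDiagram v h T Q :=
    heq ▸ mem_adjoinBlock_self
  have hcentral := hP.eq_of_mem mem_adjoinBlock_self hmem' zero_mem_centralBlock
    zero_mem_centralBlock
  obtain rfl : T = T' := insertedPoints_injective <|
    centralBlock_injOn (insertedPoints_subset_Icc hT) (insertedPoints_subset_Icc hT') hcentral
  exact ⟨rfl, adjoinBlock_injOn (residueLabel_injOn hT) centralBlock_nonempty
    (disjoint_centralBlock_image hT) hsub (isUniformPartition_Icc_iff.2 hQ').subset_powerset heq⟩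

lemma exists_centralBlock_insertedPoints_mem
    {P : Finset (Finset (ZMod (2 * (v + h) + 1)))}
    (hP : IsChordDiagram (2 * (v + h) + 1) (2 * h + 1) P)
    (hloop : ChordLoopless (2 * (v + h) + 1) P) (hneg : ∀ b ∈ P, b.image (fun i ↦ -i) ∈ P) :
    ∃ T ∈ powersetCard h (Ico 1 v), centralBlock (v + h) (insertedPoints T) ∈ P := by
  obtain ⟨B, ⟨hBP, h0⟩, -⟩ := hP.2 0
  have himage : B.image (fun i ↦ -i) = B :=
    (isUniformPartition_univ_iff.2 hP).eq_of_mem (hneg B hBP) hBP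
      (mem_image.2 ⟨0, h0, neg_zero⟩) h0
  obtain ⟨S, hS, rfl⟩ := exists_centralBlock_eq h0 fun x hx ↦
    himage ▸ mem_image_of_mem (fun i ↦ -i) hx
  have hcard : #S = h := by
    have := (card_centralBlock hS).symm.trans (hP.1 _ hBP)
    omega
  obtain ⟨hSIco, hsucc⟩ :=
    separated_of_centralBlock_loopless hS fun x hx hx1 ↦ hloop x _ hBP hx hx1
  obtain ⟨T, hT, hTS, rfl⟩ := exists_insertedPoints_eq S hsucc v (hcard.symm ▸ hSIco)
  exact ⟨T, mem_powersetCard.2 ⟨hT, hTS.trans hcard⟩, hBP⟩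

lemma bijOn_reflectionDiagram (hM : 0 < v + h) :
    Set.BijOn (fun p : Finset (Finset ℕ) × Finset ℕ ↦ reflectionDiagram v h p.2 p.1)
      {p | IsMSymLinear (2 * h + 1) 2 v p.1 ∧ p.2 ∈ powersetCard h (Ico 1 v) ∧
        firstSectorLoops v p.1 ⊆ p.2}
      {P | IsChordDiagram (2 * (v + h) + 1) (2 * h + 1) P ∧ ChordLoopless (2 * (v + h) + 1) P ∧
        ∀ b ∈ P, b.image (fun i ↦ -i) ∈ P} := by
  have hd : Odd (2 * h + 1) := odd_two_mul_add_one h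
  refine ⟨?_, ?_, ?_⟩
  · rintro ⟨Q, T⟩ ⟨hQ, hT, hsub⟩
    have hpow := (isUniformPartition_Icc_iff.2 hQ.1).subset_powerset
    exact ⟨(isChordDiagram_reflectionDiagram_iff hT hpow).2 hQ.1,
      (chordLoopless_reflectionDiagram_iff hM hT hd hQ).2 hsub,
      (reflectionDiagram_neg_invariant_iff hT hpow).2 hQ.2⟩
  · rintro ⟨Q, T⟩ ⟨hQ, hT, -⟩ ⟨Q', T'⟩ ⟨hQ', hT', -⟩ heq
    obtain ⟨rfl, rfl⟩ := reflectionDiagram_inj hT hT' hQ.1 hQ'.1 heq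
    rfl
  · rintro P ⟨hP, hloop, hneg⟩
    obtain ⟨T, hT, hmem⟩ := exists_centralBlock_insertedPoints_mem hP hloop hneg
    obtain ⟨Q, hpow, rfl⟩ : ∃ Q ⊆ (Icc 1 (2 * v)).powerset, reflectionDiagram v h T Q = P :=
      exists_adjoinBlock_eq
        (centralBlock_union_image hT ▸ isUniformPartition_univ_iff.2 hP) hmem
    have hQ : IsMSymLinear (2 * h + 1) 2 v Q :=
      ⟨(isChordDiagram_reflectionDiagram_iff hT hpow).1 hP,
        (reflectionDiagram_neg_invariant_iff hT hpow).1 hneg⟩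
    exact ⟨(Q, T), ⟨hQ, hT, (chordLoopless_reflectionDiagram_iff hM hT hd hQ).1 hloop⟩, rfl⟩

end ReflectionDiagram

section Counting

lemma ncard_setOf_subset_mem_powersetCard {α β : Type*} {A : Set α}
    (hA : A.Finite) {L : α → Finset β} {Y : Finset β} (hL : ∀ a ∈ A, L a ⊆ Y) (h : ℕ) :
    {p : α × Finset β | p.1 ∈ A ∧ p.2 ∈ powersetCard h Y ∧ L p.1 ⊆ p.2}.ncard =
      ∑ k ∈ range (h + 1), (#Y - k).choose (h - k) * {a | a ∈ A ∧ #(L a) = k}.ncard := by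
  classical
  lift A to Finset α using hA
  have hfiber (a : α) (ha : a ∈ A) : #{T ∈ powersetCard h Y | L a ⊆ T} =
      ∑ k ∈ range (h + 1), if #(L a) = k then (#Y - k).choose (h - k) else 0 := by
    rw [sum_ite_eq]
    split_ifs with hk
    · exact card_filter_powersetCard_subset _ _ _ (hL a ha) (mem_range_succ_iff.1 hk)
    · refine card_eq_zero.2 (filter_eq_empty_iff.2 fun T hT hLT ↦ hk ?_)
      exact mem_range_succ_iff.2 ((mem_powersetCard.1 hT).2 ▸ card_le_card hLT)
  have hset : {p : α × Finset β | p.1 ∈ (A : Set α) ∧ p.2 ∈ powersetCard h Y ∧ L p.1 ⊆ p.2} =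
      ↑{p ∈ A ×ˢ powersetCard h Y | L p.1 ⊆ p.2} := by
    ext p
    simp [and_assoc]
  have hlevel (k : ℕ) : {a | a ∈ (A : Set α) ∧ #(L a) = k} = ↑{a ∈ A | #(L a) = k} := by
    ext a
    simp
  simp only [hset, hlevel, Set.ncard_coe_finset]
  calc #{p ∈ A ×ˢ powersetCard h Y | L p.1 ⊆ p.2}
      = ∑ a ∈ A, #{T ∈ powersetCard h Y | L a ⊆ T} := by
        simp only [card_filter, sum_product]
    _ = ∑ k ∈ range (h + 1), ∑ a ∈ A,
          if #(L a) = k then (#Y - k).choose (h - k) else 0 := by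
        rw [sum_congr rfl hfiber, sum_comm]
    _ = ∑ k ∈ range (h + 1), (#Y - k).choose (h - k) * #{a ∈ A | #(L a) = k} :=
        sum_congr rfl fun k _ ↦ by rw [← sum_filter, sum_const, smul_eq_mul, mul_comm]

lemma ncard_reflection_invariant_loopless {N h v : ℕ} (hM : 0 < v + h)
    (hN : N = 2 * (v + h) + 1) :
    {P : Finset (Finset (ZMod N)) | IsChordDiagram N (2 * h + 1) P ∧ ChordLoopless N P ∧
        ∀ b ∈ P, b.image (fun i ↦ -i) ∈ P}.ncard =
      ∑ k ∈ range (h + 1), (v - 1 - k).choose (h - k) * numAtil (2 * h + 1) 2 v k := by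
  subst hN
  rw [← (bijOn_reflectionDiagram hM).ncard_eq]
  simpa only [numAtil_eq_ncard two_pos, Nat.card_Ico, Set.mem_ofPred_eq] using
    ncard_setOf_subset_mem_powersetCard (finite_setOf_isMSymLinear (2 * h + 1) 2 v)
      (fun Q _ ↦ firstSectorLoops_subset_Ico (Q := Q)) h

end Counting

end ReflectedDiagram

/-- for odd `d ≥ 3` and odd `n ≥ 3`, the number of loopless generalized
chord diagrams of order `(n,d)` invariant under `i ↦ −i`. -/
theorem reflection_one_fixed_point (d : ℕ) (hd : 3 ≤ d) (hdo : Odd d)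
    (n : ℕ) (hn : 3 ≤ n) (hno : Odd n) :
    Set.ncard {P : Finset (Finset (ZMod (n * d))) |
        IsChordDiagram (n * d) d P ∧ ChordLoopless (n * d) P ∧
          ∀ b ∈ P, b.image (fun i => -i) ∈ P} =
      ∑ k ∈ Finset.range ((d - 1) / 2 + 1),
        (d * (n - 1) / 2 - 1 - k).choose ((d - 1) / 2 - k) *
          numAtil d 2 (d * (n - 1) / 2) k := by
  obtain ⟨h, rfl⟩ := hdo
  obtain ⟨m, rfl⟩ := hno
  have hsector : (2 * h + 1) * (2 * m + 1 - 1) / 2 = (2 * h + 1) * m := by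
    rw [Nat.add_sub_cancel, mul_left_comm, Nat.mul_div_cancel_left _ two_pos]
  have hhalf : (2 * h + 1 - 1) / 2 = h := by omega
  rw [hsector, hhalf]
  exact ReflectedDiagram.ncard_reflection_invariant_loopless (by omega) (by ring)
end
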